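/- Let v, u be positive twice-differentiable functions on an interval with u constant and v concave (v'' ≤ 0). Let H = uv/(u+v). Then H² · (ln H)'' ≥ H² · (ln v)'', i.e., H·H'' − (H')² ≥ H²·(v·v'' − (v')²)/v². -/

import Mathlib

open Set

/-- For positive functions on an interval with u constant and v concave,
the harmonic mean H = uv/(u+v) satisfies H·H'' − (H')² ≥ H²·(v·v'' − (v')²)/v². -/
theorem harmonic_mean_log_concavity (a b : ℝ) (c : ℝ) (hc : 0 < c) (v : ℝ → ℝ)
    (hv : ∀ x ∈ Ioo a b, ContDiffAt ℝ 2 v x)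
    (hvpos : ∀ x ∈ Ioo a b, 0 < v x)
    (hvconc : ∀ x ∈ Ioo a b, deriv (deriv v) x ≤ 0) :
    ∀ x ∈ Ioo a b,
      (fun y => c * v y / (c + v y)) x * deriv (deriv (fun y => c * v y / (c + v y))) x
        - (deriv (fun y => c * v y / (c + v y)) x) ^ 2
      ≥ ((fun y => c * v y / (c + v y)) x) ^ 2
        * (v x * deriv (deriv v) x - (deriv v x) ^ 2) / (v x) ^ 2 := by
  intro x hx
  have hd : ∀ y ∈ Ioo a b, HasDerivAt v (deriv v y) y := fun y hy =>
    ((hv y hy).differentiableAt (by norm_num)).hasDerivAt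
  have hH : ∀ y ∈ Ioo a b, HasDerivAt (fun y => c * v y / (c + v y))
      (c ^ 2 * deriv v y / (c + v y) ^ 2) y := by
    intro y hy
    have hne : c + v y ≠ 0 := (add_pos hc (hvpos y hy)).ne'
    have h := ((hd y hy).const_mul c).fun_div ((hd y hy).const_add c) hne
    refine h.congr_deriv ?_
    congr 1; ring
  have hd2 : HasDerivAt (deriv v) (deriv (deriv v) x) x := by
    have h1 : ContDiffAt ℝ 1 (deriv v) x := (hv x hx).derivWithin (by norm_num)
    exact (h1.differentiableAt (by norm_num)).hasDerivAt
  have hpos := hvpos x hx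
  have hS : 0 < c + v x := add_pos hc hpos
  have hEq : deriv (fun y => c * v y / (c + v y)) =ᶠ[nhds x]
      fun y => c ^ 2 * deriv v y / (c + v y) ^ 2 := by
    filter_upwards [isOpen_Ioo.mem_nhds hx] with y hy using (hH y hy).deriv
  have hH2 : deriv (deriv (fun y => c * v y / (c + v y))) x =
      c ^ 2 * (deriv (deriv v) x * (c + v x) - 2 * (deriv v x) ^ 2) / (c + v x) ^ 3 := by
    rw [hEq.deriv_eq]
    have h := (hd2.const_mul (c ^ 2)).fun_div (((hd x hx).const_add c).fun_pow 2)
      (pow_ne_zero 2 hS.ne')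
    rw [h.deriv]
    field_simp
    push_cast
    ring
  rw [hH2, (hH x hx).deriv]
  have hcc := hvconc x hx
  generalize deriv (deriv v) x = q at *
  generalize deriv v x = p at *
  have key : 0 ≤ c ^ 2 * (v x) ^ 2 * (p ^ 2 - q * (c + v x)) / (c + v x) ^ 4 := by
    have : 0 ≤ p ^ 2 - q * (c + v x) := by nlinarith [sq_nonneg p]
    positivity
  rw [ge_iff_le, ← sub_nonneg]
  convert key using 1
  field_simp
  ring
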